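/- arXiv:1811.08658 — 2 statements merged into one kernel-verified Lean document; each statement's English description precedes it below -/
import Mathlib

section
/- Let n ≥ 1 and let f : ℝⁿ_{>0} → ℝⁿ_{>0} be an order-preserving homogeneous map. Then the set E(f) := {x ∈ ℝⁿ_{>0} : ∃ λ > 0, f(x) = λx} of positive eigenvectors of f is nonempty and bounded with respect to Hilbert's metric d_H if and only if for every nonempty proper subset J of {1,…,n} there exists x ∈ ℝⁿ_{>0} such that max_{j∈J} f(x)_j / x_j < min_{j∈Jᶜ} f(x)_j / x_j. -/
/-- The variation seminorm `max_i x_i - min_i x_i` on `ℝⁿ` (a norm on `V0`). -/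
noncomputable def vnorm (n : ℕ) (x : Fin n → ℝ) : ℝ := (⨆ i, x i) - (⨅ i, x i)

/-- The norm `‖x‖_H = max(max_i x_i, 0) - min(min_i x_i, 0)` on `ℝᵐ`. -/
noncomputable def Hnorm (m : ℕ) (x : Fin m → ℝ) : ℝ :=
  max (⨆ i, x i) 0 - min (⨅ i, x i) 0

/-- Hilbert's (projective) metric on the open positive cone. -/
noncomputable def dH (n : ℕ) (x y : Fin n → ℝ) : ℝ :=
  Real.log (⨆ i, x i / y i) - Real.log (⨅ i, x i / y i)

/-- `V0 = {x ∈ ℝⁿ : x_n = 0}` (the last coordinate vanishes). -/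
def V0 (n : ℕ) : Set (Fin n → ℝ) := {x | ∀ i : Fin n, (i : ℕ) = n - 1 → x i = 0}

/-- `v` illuminates `z` (a point of the unit sphere of the norm `nrm`). -/
def illum (m : ℕ) (nrm : (Fin m → ℝ) → ℝ) (v z : Fin m → ℝ) : Prop :=
  ∃ ε > 0, ∀ l : ℝ, 0 < l → l < ε → nrm (z + l • v) < 1

/-!
In logarithmic coordinates `f` becomes a monotone map `T` of `ℝⁿ` commuting with the addition of
constants, positive eigenvectors of `f` become solutions of `T x = x + c`, and Hilbert's metric
becomes the oscillation `max (x - y) - min (x - y)`. The main tool is a comparison principle: where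
`y - x` is maximal, `T y - y ≤ T x - x`.

Monotonicity makes `T` nonexpansive, so for every `δ > 0` and `w` the discounted equation
`T y = y + δ (y - w)` has a solution by Banach's fixed point theorem, and bounded solutions
accumulate at eigenvectors as `δ → 0`.

* Suppose that every nonempty proper `J` has a point `x` with `T x - x` smaller on `J` than on `Jᶜ`.
  Comparing a solution `y` for `w = 0` with this `x` yields `i ∈ J` and `j ∉ J` such that
  `y i - y j ≤ max x - min x`. Chaining these estimates bounds the oscillation of `y` uniformly in
  `δ ≥ 0`. Letting `δ → 0` gives existence; `δ = 0` gives boundedness.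
* If some `J` has no such `x` and `u` is an eigenvector, discounting toward `w = u + R · 1_J` forces
  the oscillation of `y - u` to be at least `R`, and `δ → 0` yields an eigenvector at distance at
  least `R` from `u`, for every `R`.
-/

open Filter Topology Function

section Topical

variable {ι : Type*} {T : (ι → ℝ) → ι → ℝ} {u w x y : ι → ℝ} {C R δ : ℝ}

/-- Topical maps, the logarithmic form of order-preserving homogeneous maps of the positive cone. -/
structure IsTopical (T : (ι → ℝ) → ι → ℝ) : Prop where
  monotone : Monotone T
  map_add_const : ∀ x c, T (x + const ι c) = T x + const ι c

/-- Additive eigenvectors of `T`, the logarithms of positive eigenvectors. The condition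
`T x = x + c` is written with the displacement `T x - x` because the argument compares
displacements. -/
def addEigenvectors (T : (ι → ℝ) → ι → ℝ) : Set (ι → ℝ) :=
  {x | ∃ c, T x - x = const ι c}

/-- Solutions of the eigenvector equation of `T` perturbed by a pull toward `w` at rate `δ`. The
free constant `c` makes this set invariant under the addition of constants. -/
def discountedEigenvectors (T : (ι → ℝ) → ι → ℝ) (w : ι → ℝ) (δ : ℝ) : Set (ι → ℝ) :=
  {y | ∃ c, T y - y = δ • (y - w) + const ι c}

/-- The condition `max_{j ∈ J} f(x)_j / x_j < min_{j ∈ Jᶜ} f(x)_j / x_j` in logarithmic coordinates,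
stated pointwise so that `J` may be empty or everything. -/
def SeparatesDisplacement (T : (ι → ℝ) → ι → ℝ) (J : Finset ι) (x : ι → ℝ) : Prop :=
  ∀ i ∈ J, ∀ j ∉ J, (T x - x) i < (T x - x) j

lemma discountedEigenvectors_rate_zero (T : (ι → ℝ) → ι → ℝ) (w : ι → ℝ) :
    discountedEigenvectors T w 0 = addEigenvectors T := by
  simp only [discountedEigenvectors, addEigenvectors, zero_smul, zero_add]

namespace IsTopical

lemma displacement_le_of_forall_sub_le (hT : IsTopical T) {i : ι}
    (hi : ∀ k, (y - x) k ≤ (y - x) i) : (T y - y) i ≤ (T x - x) i := by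
  have hle : y ≤ x + const ι ((y - x) i) := fun k => by
    have := hi k
    simp only [Pi.add_apply, Pi.sub_apply, const_apply] at this ⊢
    linarith
  have hTle : T y i ≤ T x i + (y - x) i := by
    simpa only [hT.map_add_const, Pi.add_apply, const_apply] using hT.monotone hle i
  simp only [Pi.sub_apply] at hTle ⊢
  linarith

lemma add_const_mem_discountedEigenvectors (hT : IsTopical T)
    (hy : y ∈ discountedEigenvectors T w δ) (a : ℝ) :
    y + const ι a ∈ discountedEigenvectors T w δ := by
  obtain ⟨c, hc⟩ := hy
  refine ⟨c - δ * a, ?_⟩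
  rw [hT.map_add_const, add_sub_add_right_eq_sub, hc]
  ext i
  simp only [Pi.add_apply, Pi.smul_apply, Pi.sub_apply, const_apply, smul_eq_mul]
  ring

lemma lipschitzWith_one [Fintype ι] (hT : IsTopical T) : LipschitzWith 1 T := by
  have apply_le (x y : ι → ℝ) (i : ι) : T x i ≤ T y i + dist x y := by
    have hle : x ≤ y + const ι (dist x y) := fun k =>
      sub_le_iff_le_add'.1 ((Real.sub_le_dist _ _).trans (dist_le_pi_dist x y k))
    simpa only [hT.map_add_const, Pi.add_apply, const_apply] using hT.monotone hle i
  refine LipschitzWith.mk_one fun x y => (dist_pi_le_iff dist_nonneg).2 fun i => ?_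
  rw [Real.dist_eq, abs_sub_le_iff, sub_le_iff_le_add', sub_le_iff_le_add']
  exact ⟨apply_le x y i, dist_comm x y ▸ apply_le y x i⟩

lemma continuous [Finite ι] (hT : IsTopical T) : Continuous T := by
  cases nonempty_fintype ι
  exact hT.lipschitzWith_one.continuous

end IsTopical

lemma exists_sub_eq_smul_sub_of_lipschitzWith_one {E : Type*} [NormedAddCommGroup E]
    [NormedSpace ℝ E] [CompleteSpace E] {T : E → E} (hT : LipschitzWith 1 T) (hδ : 0 < δ) (w : E) :
    ∃ y, T y - y = δ • (y - w) := by
  have hr : 0 ≤ (1 + δ)⁻¹ := by positivity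
  have hcontr : ContractingWith ⟨(1 + δ)⁻¹, hr⟩ fun y => (1 + δ)⁻¹ • (T y + δ • w) := by
    refine ⟨NNReal.coe_lt_coe.1 (inv_lt_one_of_one_lt₀ (by linarith)),
      LipschitzWith.of_dist_le_mul fun x y => ?_⟩
    rw [dist_smul₀, dist_add_right, Real.norm_of_nonneg hr]
    exact mul_le_mul_of_nonneg_left (by simpa using hT.dist_le_mul x y) hr
  obtain ⟨y, hy, -⟩ := hcontr.exists_fixedPoint 0 (edist_ne_top _ _)
  have hfix : T y + δ • w = (1 + δ) • y := (inv_smul_eq_iff₀ (by positivity)).1 hy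
  refine ⟨y, ?_⟩
  rw [eq_sub_of_add_eq hfix]
  module

lemma exists_mem_addEigenvectors_of_isCompact [Countable ι] [Nonempty ι] (hT : Continuous T)
    {K : Set (ι → ℝ)} (hK : IsCompact K)
    (h : ∀ δ > 0, (K ∩ discountedEigenvectors T w δ).Nonempty) :
    (K ∩ addEigenvectors T).Nonempty := by
  let ε (k : ℕ) : ℝ := 1 / ((k : ℝ) + 1)
  choose y hyK c hc using fun k => h (ε k) Nat.one_div_pos_of_nat
  obtain ⟨z, hzK, φ, hφ, hlim⟩ := hK.tendsto_subseq hyK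
  have hε : Tendsto (ε ∘ φ) atTop (𝓝 0) :=
    tendsto_one_div_add_atTop_nhds_zero_nat.comp hφ.tendsto_atTop
  have hconst : Tendsto (fun k => const ι (c (φ k))) atTop (𝓝 (T z - z)) := by
    have hdisp := (((hT.tendsto z).comp hlim).sub hlim).sub (hε.smul (hlim.sub_const w))
    simpa only [comp_apply, hc, add_sub_cancel_left, zero_smul, sub_zero] using hdisp
  have happly (i : ι) : Tendsto (fun k => c (φ k)) atTop (𝓝 ((T z - z) i)) :=
    tendsto_pi_nhds.1 hconst i
  obtain ⟨i₀⟩ := ‹Nonempty ι›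
  exact ⟨z, hzK, (T z - z) i₀, funext fun i => tendsto_nhds_unique (happly i) (happly i₀)⟩

lemma isCompact_setOf_apply_eq_zero_and_sub_le (i₀ : ι) (C : ℝ) :
    IsCompact {y : ι → ℝ | y i₀ = 0 ∧ ∀ i j, y i - y j ≤ C} := by
  refine (isCompact_Icc (a := const ι (-C)) (b := const ι C)).of_isClosed_subset ?_ ?_
  · simp only [Set.ofPred_and, Set.ofPred_forall]
    refine (isClosed_eq (by fun_prop) (by fun_prop)).inter ?_
    exact isClosed_iInter fun i => isClosed_iInter fun j => isClosed_le (by fun_prop) (by fun_prop)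
  · rintro y ⟨hy₀, hy⟩
    exact ⟨fun i => by simpa [hy₀, neg_le] using hy i₀ i, fun i => by simpa [hy₀] using hy i i₀⟩

namespace IsTopical

variable [Finite ι]

lemma exists_mem_addEigenvectors_of_forall_discounted [Nonempty ι] (hT : IsTopical T)
    {S : Set (ι → ℝ)} (hS : IsClosed S) (hmem : ∀ δ > 0, discountedEigenvectors T w δ ⊆ S)
    (hC : ∀ δ > 0, ∀ y ∈ discountedEigenvectors T w δ, ∀ i j, y i - y j ≤ C) :
    (S ∩ addEigenvectors T).Nonempty := by
  cases nonempty_fintype ι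
  let i₀ := Classical.arbitrary ι
  let K := {y : ι → ℝ | y i₀ = 0 ∧ ∀ i j, y i - y j ≤ C}
  have hK : IsCompact (S ∩ K) := (isCompact_setOf_apply_eq_zero_and_sub_le i₀ C).inter_left hS
  obtain ⟨z, ⟨hzS, -⟩, hz⟩ :=
    exists_mem_addEigenvectors_of_isCompact (w := w) hT.continuous hK fun δ hδ => by
      obtain ⟨y, hy⟩ := exists_sub_eq_smul_sub_of_lipschitzWith_one hT.lipschitzWith_one hδ w
      have hmem₀ : y + const ι (-y i₀) ∈ discountedEigenvectors T w δ :=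
        hT.add_const_mem_discountedEigenvectors ⟨0, by simpa using hy⟩ _
      exact ⟨_, ⟨hmem δ hδ hmem₀, by simp, hC δ hδ _ hmem₀⟩, hmem₀⟩
  exact ⟨z, hzS, hz⟩

lemma sub_le_of_mem_discountedEigenvectors (hT : IsTopical T) (hu : u ∈ addEigenvectors T)
    (hδ : 0 < δ) (hy : y ∈ discountedEigenvectors T w δ)
    (hR : ∀ i j, (w - u) i - (w - u) j ≤ R) (i j : ι) : (y - u) i - (y - u) j ≤ R := by
  have : Nonempty ι := ⟨i⟩
  obtain ⟨a, ha⟩ := Finite.exists_max (y - u)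
  obtain ⟨b, hb⟩ := Finite.exists_max (u - y)
  obtain ⟨c, hc⟩ := hu
  obtain ⟨d, hd⟩ := hy
  have hdisp : (T y - y) a ≤ (T y - y) b := calc
    (T y - y) a ≤ (T u - u) a := hT.displacement_le_of_forall_sub_le ha
    _ = (T u - u) b := by rw [hc]; rfl
    _ ≤ (T y - y) b := hT.displacement_le_of_forall_sub_le hb
  have hpull : (y - w) a ≤ (y - w) b := by
    rw [hd] at hdisp
    exact le_of_mul_le_mul_left ((add_le_add_iff_right d).1 hdisp) hδ
  have hia := ha i
  have hjb := hb j
  have hab := hR a b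
  simp only [Pi.sub_apply] at hpull hia hjb hab ⊢
  linarith

lemma exists_mem_addEigenvectors_le_sub (hT : IsTopical T) (hu : u ∈ addEigenvectors T)
    {J : Finset ι} (hJ : ∀ x, ¬SeparatesDisplacement T J x) (R : ℝ) :
    ∃ y ∈ addEigenvectors T, ∃ i j, R ≤ (y - u) i - (y - u) j := by
  classical
  obtain ⟨i₀, -⟩ := not_forall.1 (hJ u)
  have : Nonempty ι := ⟨i₀⟩
  let w : ι → ℝ := u + J.piecewise (const ι R) 0
  let S : Set (ι → ℝ) := {y | ∃ i j, R ≤ (y - u) i - (y - u) j}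
  have hS : IsClosed S := by
    simp only [S, Set.ofPred_exists]
    exact isClosed_iUnion_of_finite fun i => isClosed_iUnion_of_finite fun j =>
      isClosed_le (by fun_prop) (by fun_prop)
  have hmem : ∀ δ > 0, discountedEigenvectors T w δ ⊆ S := by
    rintro δ hδ y ⟨c, hc⟩
    have hy := hJ y
    simp only [SeparatesDisplacement, not_forall, not_lt] at hy
    obtain ⟨i, hi, j, hj, hij⟩ := hy
    rw [hc] at hij
    have hpull : (y - w) j ≤ (y - w) i :=
      le_of_mul_le_mul_left ((add_le_add_iff_right c).1 hij) hδ
    have hwi : w i = u i + R := by simp [w, hi]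
    have hwj : w j = u j := by simp [w, hj]
    refine ⟨i, j, ?_⟩
    simp only [Pi.sub_apply, hwi, hwj] at hpull ⊢
    linarith
  have hw (i j : ι) : (w - u) i - (w - u) j ≤ |R| := by
    by_cases hi : i ∈ J <;> by_cases hj : j ∈ J <;> simp [w, hi, hj, neg_le_abs, le_abs_self]
  obtain ⟨B, hB⟩ := (Set.finite_range fun p : ι × ι => u p.1 - u p.2).bddAbove
  have hC : ∀ δ > 0, ∀ y ∈ discountedEigenvectors T w δ, ∀ i j, y i - y j ≤ |R| + B := by
    intro δ hδ y hy i j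
    have hyu := hT.sub_le_of_mem_discountedEigenvectors hu hδ hy hw i j
    have huB : u i - u j ≤ B := hB ⟨(i, j), rfl⟩
    simp only [Pi.sub_apply] at hyu
    linarith
  obtain ⟨y, hyS, hy⟩ := hT.exists_mem_addEigenvectors_of_forall_discounted hS hmem hC
  exact ⟨y, hy, hyS⟩

lemma exists_sub_le_of_separatesDisplacement (hT : IsTopical T) {J : Finset ι}
    (hJ : J.Nonempty) (hJc : ∃ j, j ∉ J) (hx : SeparatesDisplacement T J x)
    (hC : ∀ i j, x i - x j ≤ C) (hδ : 0 ≤ δ) (hy : y ∈ discountedEigenvectors T 0 δ) :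
    ∃ i ∈ J, ∃ j ∉ J, y i - y j ≤ C := by
  by_contra! hfar
  obtain ⟨i₀, hi₀⟩ := hJ
  obtain ⟨j₀, hj₀⟩ := hJc
  have : Nonempty ι := ⟨i₀⟩
  obtain ⟨a, ha⟩ := Finite.exists_max (y - x)
  obtain ⟨b, hb⟩ := Finite.exists_max (x - y)
  have haJ : a ∈ J := by
    by_contra haJ
    have := ha i₀
    simp only [Pi.sub_apply] at this
    linarith [hfar i₀ hi₀ a haJ, hC i₀ a]
  have hbJ : b ∉ J := fun hbJ => by
    have := hb j₀
    simp only [Pi.sub_apply] at this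
    linarith [hfar b hbJ j₀ hj₀, hC b j₀]
  have hdisp : (T y - y) a < (T y - y) b := calc
    (T y - y) a ≤ (T x - x) a := hT.displacement_le_of_forall_sub_le ha
    _ < (T x - x) b := hx a haJ b hbJ
    _ ≤ (T y - y) b := hT.displacement_le_of_forall_sub_le hb
  have hlt : y a < y b := by
    obtain ⟨c, hc⟩ := hy
    rw [hc, sub_zero] at hdisp
    exact lt_of_mul_lt_mul_left ((add_lt_add_iff_right c).1 hdisp) hδ
  linarith [hfar a haJ b hbJ, hC a a]

end IsTopical

lemma sub_le_card_mul_of_forall_exists_sub_le [Fintype ι] (hC₀ : 0 ≤ C)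
    (hC : ∀ J : Finset ι, J.Nonempty → (∃ j, j ∉ J) → ∃ i ∈ J, ∃ j ∉ J, y i - y j ≤ C)
    (i j : ι) : y i - y j ≤ Fintype.card ι * C := by
  classical
  have grow (k : ℕ) (hk : k < Fintype.card ι) :
      ∃ J : Finset ι, i ∈ J ∧ J.card = k + 1 ∧ ∀ m ∈ J, y i - y m ≤ k * C := by
    induction k with
    | zero => exact ⟨{i}, by simp, by simp, by simp⟩
    | succ k ih =>
      obtain ⟨J, hiJ, hcard, hJ⟩ := ih (by lia)
      have hJc : ∃ j, j ∉ J := by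
        by_contra! hall
        rw [Finset.eq_univ_of_forall hall, Finset.card_univ] at hcard
        lia
      obtain ⟨a, ha, b, hb, hab⟩ := hC J ⟨i, hiJ⟩ hJc
      refine ⟨insert b J, Finset.mem_insert_of_mem hiJ,
        by rw [Finset.card_insert_of_notMem hb, hcard], fun m hm => ?_⟩
      push_cast
      rcases Finset.mem_insert.1 hm with rfl | hm
      · linarith [hJ a ha]
      · linarith [hJ m hm]
  have : Nonempty ι := ⟨i⟩
  obtain ⟨k, hk⟩ := Nat.exists_eq_add_one_of_ne_zero (Fintype.card_ne_zero (α := ι))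
  obtain ⟨J, -, hcard, hJ⟩ := grow k (by lia)
  have hj : j ∈ J := Finset.eq_univ_of_card J (hcard.trans hk.symm) ▸ Finset.mem_univ j
  rw [hk]
  push_cast
  linarith [hJ j hj]

lemma IsTopical.exists_forall_discountedEigenvectors_sub_le [Finite ι] (hT : IsTopical T)
    (hJ : ∀ J : Finset ι, J.Nonempty → (∃ j, j ∉ J) → ∃ x, SeparatesDisplacement T J x) :
    ∃ C, ∀ δ ≥ 0, ∀ y ∈ discountedEigenvectors T 0 δ, ∀ i j, y i - y j ≤ C := by
  cases nonempty_fintype ι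
  choose! X hX using hJ
  obtain ⟨B, hB⟩ :=
    (Set.finite_range fun p : Finset ι × ι × ι => X p.1 p.2.1 - X p.1 p.2.2).bddAbove
  have hosc (J : Finset ι) (i j : ι) : X J i - X J j ≤ B := hB ⟨(J, i, j), rfl⟩
  refine ⟨Fintype.card ι * B, fun δ hδ y hy i => ?_⟩
  have hB₀ : 0 ≤ B := by simpa using hosc ∅ i i
  exact sub_le_card_mul_of_forall_exists_sub_le hB₀ (fun J hJ hJc =>
    hT.exists_sub_le_of_separatesDisplacement hJ hJc (hX J hJ hJc) (hosc J) hδ hy) i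

theorem IsTopical.nonempty_and_bounded_addEigenvectors_iff [Finite ι] [Nonempty ι]
    (hT : IsTopical T) :
    ((addEigenvectors T).Nonempty ∧ ∃ M, ∀ x ∈ addEigenvectors T, ∀ y ∈ addEigenvectors T,
      ∀ i j, (x - y) i - (x - y) j ≤ M) ↔
    ∀ J : Finset ι, J.Nonempty → (∃ j, j ∉ J) → ∃ x, SeparatesDisplacement T J x := by
  constructor
  · rintro ⟨⟨u, hu⟩, M, hM⟩ J - -
    by_contra! hJ
    obtain ⟨y, hy, i, j, hij⟩ := hT.exists_mem_addEigenvectors_le_sub hu hJ (M + 1)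
    linarith [hM y hy u hu i j]
  · intro hJ
    obtain ⟨C, hC⟩ := hT.exists_forall_discountedEigenvectors_sub_le hJ
    have hbdd : ∀ x ∈ addEigenvectors T, ∀ i j, x i - x j ≤ C := by
      simpa only [discountedEigenvectors_rate_zero] using hC 0 le_rfl
    refine ⟨?_, C + C, fun x hx y hy i j => ?_⟩
    · exact (hT.exists_mem_addEigenvectors_of_forall_discounted isClosed_univ
        (fun δ _ => Set.subset_univ _) fun δ hδ => hC δ hδ.le).right
    · have hxij := hbdd x hx i j
      have hyji := hbdd y hy j i
      simp only [Pi.sub_apply]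
      linarith

end Topical

section PositiveCone

variable {ι : Type*} {f : (ι → ℝ) → ι → ℝ}

/-- Order-preserving homogeneous maps of the open positive cone. `f` is encoded as a
function on all of `ι → ℝ` whose values off the cone are irrelevant. -/
structure IsMonotoneHomogeneous (f : (ι → ℝ) → ι → ℝ) : Prop where
  pos : ∀ x, (∀ i, 0 < x i) → ∀ i, 0 < f x i
  mono : ∀ x y, (∀ i, 0 < x i) → (∀ i, 0 < y i) → x ≤ y → f x ≤ f y
  map_smul : ∀ c : ℝ, 0 < c → ∀ x, (∀ i, 0 < x i) → f (c • x) = c • f x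

/-- The set `E(f)` of positive eigenvectors of `f`. -/
def positiveEigenvectors (f : (ι → ℝ) → ι → ℝ) : Set (ι → ℝ) :=
  {x | (∀ i, 0 < x i) ∧ ∃ l : ℝ, 0 < l ∧ f x = l • x}

/-- Hilbert's projective metric `dH` with an arbitrary index type. -/
noncomputable def hilbertDist (x y : ι → ℝ) : ℝ :=
  Real.log (⨆ i, x i / y i) - Real.log (⨅ i, x i / y i)

/-- The map `f` in logarithmic coordinates. -/
noncomputable def logConj (f : (ι → ℝ) → ι → ℝ) (x : ι → ℝ) : ι → ℝ :=
  Real.log ∘ f (Real.exp ∘ x)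

lemma exp_comp_log_comp {x : ι → ℝ} (hx : ∀ i, 0 < x i) : Real.exp ∘ Real.log ∘ x = x :=
  funext fun i => Real.exp_log (hx i)

lemma exists_forall_pos_and_iff_exists_exp_comp {p : (ι → ℝ) → Prop} :
    (∃ x, (∀ i, 0 < x i) ∧ p x) ↔ ∃ x : ι → ℝ, p (Real.exp ∘ x) :=
  ⟨fun ⟨x, hx, hpx⟩ => ⟨Real.log ∘ x, by rwa [exp_comp_log_comp hx]⟩,
    fun ⟨x, hpx⟩ => ⟨Real.exp ∘ x, fun _ => Real.exp_pos _, hpx⟩⟩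

lemma exp_comp_add_const (x : ι → ℝ) (c : ℝ) :
    Real.exp ∘ (x + const ι c) = Real.exp c • (Real.exp ∘ x) :=
  funext fun i => by simp [Real.exp_add, mul_comm]

namespace IsMonotoneHomogeneous

lemma exp_comp_logConj (hf : IsMonotoneHomogeneous f) (x : ι → ℝ) :
    Real.exp ∘ logConj f x = f (Real.exp ∘ x) :=
  exp_comp_log_comp (hf.pos _ fun _ => Real.exp_pos _)

lemma isTopical_logConj (hf : IsMonotoneHomogeneous f) : IsTopical (logConj f) where
  monotone x y hxy i := by
    have hpos (z : ι → ℝ) (i : ι) : 0 < (Real.exp ∘ z) i := Real.exp_pos _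
    exact Real.log_le_log (hf.pos _ (hpos x) i)
      (hf.mono _ _ (hpos x) (hpos y) (fun k => Real.exp_le_exp.2 (hxy k)) i)
  map_add_const x c := by
    refine Real.exp_injective.comp_left ?_
    dsimp only
    rw [hf.exp_comp_logConj, exp_comp_add_const, exp_comp_add_const, hf.exp_comp_logConj,
      hf.map_smul _ (Real.exp_pos c) (Real.exp ∘ x) fun _ => Real.exp_pos _]

lemma exp_comp_mem_positiveEigenvectors_iff (hf : IsMonotoneHomogeneous f) {x : ι → ℝ} :
    Real.exp ∘ x ∈ positiveEigenvectors f ↔ x ∈ addEigenvectors (logConj f) := by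
  have heigen (c : ℝ) : f (Real.exp ∘ x) = Real.exp c • (Real.exp ∘ x) ↔
      logConj f x - x = const ι c := by
    rw [← hf.exp_comp_logConj, ← exp_comp_add_const, Real.exp_injective.comp_left.eq_iff,
      sub_eq_iff_eq_add']
  constructor
  · rintro ⟨-, l, hl, hfx⟩
    exact ⟨Real.log l, (heigen _).1 (by rwa [Real.exp_log hl])⟩
  · rintro ⟨c, hc⟩
    exact ⟨fun _ => Real.exp_pos _, Real.exp c, Real.exp_pos c, (heigen c).2 hc⟩

lemma positiveEigenvectors_eq_image (hf : IsMonotoneHomogeneous f) :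
    positiveEigenvectors f = (Real.exp ∘ ·) '' addEigenvectors (logConj f) := by
  ext x
  constructor
  · intro hx
    refine ⟨Real.log ∘ x, ?_, exp_comp_log_comp hx.1⟩
    rwa [← hf.exp_comp_mem_positiveEigenvectors_iff, exp_comp_log_comp hx.1]
  · rintro ⟨y, hy, rfl⟩
    exact hf.exp_comp_mem_positiveEigenvectors_iff.2 hy

lemma apply_exp_comp_div_exp (hf : IsMonotoneHomogeneous f) (x : ι → ℝ) (i : ι) :
    f (Real.exp ∘ x) i / (Real.exp ∘ x) i = Real.exp ((logConj f x - x) i) := by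
  rw [← hf.exp_comp_logConj, Pi.sub_apply, Real.exp_sub, comp_apply, comp_apply]

lemma sup'_lt_inf'_iff_separatesDisplacement [Fintype ι] [DecidableEq ι]
    (hf : IsMonotoneHomogeneous f) {J : Finset ι} (hJ : J.Nonempty) (hJc : Jᶜ.Nonempty)
    (x : ι → ℝ) :
    J.sup' hJ (fun j => f (Real.exp ∘ x) j / (Real.exp ∘ x) j) <
        Jᶜ.inf' hJc (fun j => f (Real.exp ∘ x) j / (Real.exp ∘ x) j) ↔
      SeparatesDisplacement (logConj f) J x := by
  rw [Finset.sup'_lt_iff]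
  simp only [Finset.lt_inf'_iff, hf.apply_exp_comp_div_exp, Real.exp_lt_exp,
    Finset.mem_compl, SeparatesDisplacement]

end IsMonotoneHomogeneous

lemma hilbertDist_exp_comp_le_iff [Finite ι] [Nonempty ι] {x y : ι → ℝ} {M : ℝ} :
    hilbertDist (Real.exp ∘ x) (Real.exp ∘ y) ≤ M ↔ ∀ i j, (x - y) i - (x - y) j ≤ M := by
  have hdiv (i : ι) : (Real.exp ∘ x) i / (Real.exp ∘ y) i = Real.exp ((x - y) i) :=
    (Real.exp_sub _ _).symm
  obtain ⟨a, ha⟩ := Finite.exists_max (x - y)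
  obtain ⟨b, hb⟩ := Finite.exists_min (x - y)
  have hsup : ⨆ i, Real.exp ((x - y) i) = Real.exp ((x - y) a) :=
    le_antisymm (ciSup_le fun i => Real.exp_le_exp.2 (ha i))
      (le_ciSup (f := fun i => Real.exp ((x - y) i)) (Set.finite_range _).bddAbove a)
  have hinf : ⨅ i, Real.exp ((x - y) i) = Real.exp ((x - y) b) :=
    le_antisymm (ciInf_le (f := fun i => Real.exp ((x - y) i)) (Set.finite_range _).bddBelow b)
      (le_ciInf fun i => Real.exp_le_exp.2 (hb i))
  rw [hilbertDist, funext hdiv, hsup, hinf, Real.log_exp, Real.log_exp]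
  exact ⟨fun h i j => (sub_le_sub (ha i) (hb j)).trans h, fun h => h a b⟩

theorem stmt0_general [Fintype ι] [Nonempty ι] [DecidableEq ι] (hf : IsMonotoneHomogeneous f) :
    ((positiveEigenvectors f).Nonempty ∧
      ∃ M, ∀ x ∈ positiveEigenvectors f, ∀ y ∈ positiveEigenvectors f, hilbertDist x y ≤ M) ↔
    ∀ (J : Finset ι) (hJ : J.Nonempty) (hJc : Jᶜ.Nonempty), ∃ x : ι → ℝ, (∀ i, 0 < x i) ∧
      J.sup' hJ (fun j => f x j / x j) < Jᶜ.inf' hJc (fun j => f x j / x j) := by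
  simp only [hf.positiveEigenvectors_eq_image, Set.image_nonempty, Set.forall_mem_image,
    hilbertDist_exp_comp_le_iff, exists_forall_pos_and_iff_exists_exp_comp,
    hf.sup'_lt_inf'_iff_separatesDisplacement]
  rw [hf.isTopical_logConj.nonempty_and_bounded_addEigenvectors_iff]
  simp only [Finset.Nonempty, Finset.mem_compl]

end PositiveCone

/-- For an order-preserving homogeneous map `f` on the open positive cone,
the set of positive eigenvectors is nonempty and bounded under Hilbert's metric iff for
every nonempty proper subset `J` of the indices there is a positive `x` with
`max_{j ∈ J} f(x)_j/x_j < min_{j ∈ Jᶜ} f(x)_j/x_j`. -/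
theorem stmt0 (n : ℕ) (hn : 1 ≤ n) (f : (Fin n → ℝ) → (Fin n → ℝ))
    (hpos : ∀ x : Fin n → ℝ, (∀ i, 0 < x i) → ∀ i, 0 < f x i)
    (hmono : ∀ x y : Fin n → ℝ, (∀ i, 0 < x i) → (∀ i, 0 < y i) → x ≤ y → f x ≤ f y)
    (hhom : ∀ c : ℝ, 0 < c → ∀ x : Fin n → ℝ, (∀ i, 0 < x i) → f (c • x) = c • f x) :
    (({x : Fin n → ℝ | (∀ i, 0 < x i) ∧ ∃ l : ℝ, 0 < l ∧ f x = l • x}).Nonempty ∧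
      ∃ M : ℝ, ∀ x ∈ {x : Fin n → ℝ | (∀ i, 0 < x i) ∧ ∃ l : ℝ, 0 < l ∧ f x = l • x},
        ∀ y ∈ {x : Fin n → ℝ | (∀ i, 0 < x i) ∧ ∃ l : ℝ, 0 < l ∧ f x = l • x},
          dH n x y ≤ M) ↔
    (∀ (J : Finset (Fin n)) (hJ : J.Nonempty) (hJc : Jᶜ.Nonempty),
      ∃ x : Fin n → ℝ, (∀ i, 0 < x i) ∧
        J.sup' hJ (fun j => f x j / x j) < Jᶜ.inf' hJc (fun j => f x j / x j)) := by
  have : Nonempty (Fin n) := Fin.pos_iff_nonempty.1 hn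
  exact stmt0_general ⟨hpos, hmono, hhom⟩
end

section
/- Let V be a finite-dimensional real normed vector space and h : V → V a nonexpansive map (‖h(x) − h(y)‖ ≤ ‖x − y‖ for all x, y). Then the fixed point set Fix(h) := {x ∈ V : h(x) = x} is nonempty and bounded if and only if there exist finitely many vectors w¹,…,wᵐ ∈ V such that the set {h(wⁱ) − wⁱ : i = 1,…,m} illuminates the closed unit ball of V, i.e., for every z ∈ V with ‖z‖ = 1 there exists i ∈ {1,…,m} and ε > 0 such that ‖z + λ(h(wⁱ) − wⁱ)‖ < 1 for all 0 < λ < ε. -/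
/-! Two observations carry the proof.

If `x = (1 - s) h(x) + s y` with `0 < s < 1`, then `x` is obtained from `y` by moving in the
direction `h(x) - x`, so this direction illuminates `y` as soon as `‖x‖ < ‖y‖`. For fixed `y` such
points `x` exist by Banach's theorem, are no farther from a fixed point of `h` than `y` is, and
accumulate as `s → 0` at fixed points of `h`; if all of these are shorter than `y`, so is some `x`.

Conversely, if `h(w) - w` illuminates the direction `z`, then `‖x - w‖ < ‖x - h(w)‖` for all
sufficiently long `x` of direction close to `z`. Nonexpansiveness then excludes `h(x) = t x` with
`t ≥ 1`. By compactness of the sphere all solutions of `h(x) = t x`, `t ≥ 1`, lie in one ball, which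
bounds the fixed points and, as in the Leray–Schauder principle, also produces one. -/

open Filter Topology Bornology Metric Function

section Illumination

variable {V : Type*} [SeminormedAddCommGroup V] [NormedSpace ℝ V]

/-- The vector `v` illuminates the point `z` of the sphere of radius `‖z‖` about the origin: every
short move from `z` along `v` leads into the open ball. Allowing arbitrary `z` instead of unit
vectors makes the notion invariant under scaling of `z`. -/
def Illuminates (v z : V) : Prop :=
  ∃ ε > 0, ∀ l : ℝ, 0 < l → l < ε → ‖z + l • v‖ < ‖z‖

theorem norm_add_smul_lt_of_le {v z : V} {a l : ℝ} (hz : ‖z + a • v‖ < ‖z‖) (hl : 0 < l)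
    (hla : l ≤ a) : ‖z + l • v‖ < ‖z‖ := by
  have ha : 0 < a := hl.trans_le hla
  have hcomb : a • (z + l • v) = (a - l) • z + l • (z + a • v) := by module
  have : a * ‖z + l • v‖ < a * ‖z‖ := by
    calc a * ‖z + l • v‖ = ‖(a - l) • z + l • (z + a • v)‖ := by
          rw [← hcomb, norm_smul_of_nonneg ha.le]
      _ ≤ (a - l) * ‖z‖ + l * ‖z + a • v‖ := by
          rw [← norm_smul_of_nonneg (sub_nonneg.2 hla), ← norm_smul_of_nonneg hl.le]
          exact norm_add_le _ _
      _ < (a - l) * ‖z‖ + l * ‖z‖ := by gcongr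
      _ = a * ‖z‖ := by ring
  exact lt_of_mul_lt_mul_left this ha.le

theorem illuminates_iff_exists_pos {v z : V} :
    Illuminates v z ↔ ∃ a : ℝ, 0 < a ∧ ‖z + a • v‖ < ‖z‖ := by
  constructor
  · rintro ⟨ε, hε, h⟩
    exact ⟨ε / 2, half_pos hε, h _ (half_pos hε) (half_lt_self hε)⟩
  · rintro ⟨a, ha, h⟩
    exact ⟨a, ha, fun l hl hla ↦ norm_add_smul_lt_of_le h hl hla.le⟩

theorem Illuminates.of_smul {v z : V} {c : ℝ} (hc : 0 < c) (h : Illuminates v (c • z)) :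
    Illuminates v z := by
  obtain ⟨a, ha, hlt⟩ := illuminates_iff_exists_pos.1 h
  refine illuminates_iff_exists_pos.2 ⟨c⁻¹ * a, by positivity, ?_⟩
  have hscale : c • z + a • v = c • (z + (c⁻¹ * a) • v) := by
    rw [smul_add, smul_smul, mul_inv_cancel_left₀ hc.ne']
  rw [hscale, norm_smul_of_nonneg hc.le, norm_smul_of_nonneg hc.le] at hlt
  exact lt_of_mul_lt_mul_left hlt hc.le

theorem isOpen_setOf_illuminates (v : V) : IsOpen {z : V | Illuminates v z} := by
  simp only [illuminates_iff_exists_pos, Set.ofPred_exists, Set.ofPred_and]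
  exact isOpen_iUnion fun a ↦
    isOpen_const.inter (isOpen_lt (by fun_prop) continuous_norm)

theorem exists_fin_forall_illuminates {ι : Type*} {v : ι → V} {K : Set V} (hK : IsCompact K)
    (hv : ∀ z ∈ K, ∃ i, Illuminates (v i) z) :
    ∃ (m : ℕ) (f : Fin m → ι), ∀ z ∈ K, ∃ j, Illuminates (v (f j)) z := by
  obtain ⟨t, ht⟩ := hK.elim_finite_subcover (fun i ↦ {z | Illuminates (v i) z})
    (fun i ↦ isOpen_setOf_illuminates (v i)) (fun z hz ↦ Set.mem_iUnion.2 (hv z hz))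
  refine ⟨t.card, fun j ↦ t.equivFin.symm j, fun z hz ↦ ?_⟩
  obtain ⟨i, hi, hiz⟩ := Set.mem_iUnion₂.1 (ht hz)
  exact ⟨t.equivFin ⟨i, hi⟩, by simpa only [Equiv.symm_apply_apply, Set.mem_ofPred_eq] using hiz⟩

end Illumination

section Directions

variable {V : Type*} [SeminormedAddCommGroup V] [NormedSpace ℝ V]

/-- The filter of vectors tending to infinity in the direction of the unit vector `z`. A vector that
illuminates `z` shortens long vectors along this filter only; compactness of the sphere combines the
filters of all directions into `cobounded V`. -/
noncomputable def atInftyAlong (z : V) : Filter V :=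
  cobounded V ⊓ comap (fun x ↦ ‖x‖⁻¹ • x) (𝓝 z)

theorem eventually_cobounded_of_forall_atInftyAlong [ProperSpace V] {p : V → Prop}
    (hp : ∀ z : V, ‖z‖ = 1 → ∀ᶠ x in atInftyAlong z, p x) : ∀ᶠ x in cobounded V, p x := by
  refine mem_iff_ultrafilter.2 fun U hU ↦ ?_
  have hsphere : ∀ᶠ x in cobounded V, ‖x‖⁻¹ • x ∈ sphere (0 : V) 1 := by
    filter_upwards [tendsto_norm_cobounded_atTop.eventually_gt_atTop 0] with x hx
    rw [mem_sphere_zero_iff_norm, norm_smul_of_nonneg (by positivity), inv_mul_cancel₀ hx.ne']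
  obtain ⟨z, hz, hUz⟩ := (isCompact_sphere (0 : V) 1).ultrafilter_le_nhds
    (U.map fun x ↦ ‖x‖⁻¹ • x) (le_principal_iff.2 (hU hsphere))
  exact le_inf hU (map_le_iff_le_comap.1 hUz) (hp z (mem_sphere_zero_iff_norm.1 hz))

theorem Illuminates.eventually_norm_sub_add_lt {v z : V} (h : Illuminates v z) (b : V) :
    ∀ᶠ x in atInftyAlong z, ‖x - b + v‖ < ‖x - b‖ := by
  obtain ⟨a, ha, hlt⟩ := illuminates_iff_exists_pos.1 h
  have hnorm : Tendsto (fun x : V ↦ ‖x‖) (atInftyAlong z) atTop :=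
    tendsto_norm_cobounded_atTop.mono_left inf_le_left
  have hdir : Tendsto (fun x : V ↦ ‖x‖⁻¹ • (x - b)) (atInftyAlong z) (𝓝 z) := by
    have hx : Tendsto (fun x : V ↦ ‖x‖⁻¹ • x) (atInftyAlong z) (𝓝 z) :=
      tendsto_comap.mono_left inf_le_right
    simpa only [smul_sub, zero_smul, sub_zero, comp_apply] using
      hx.sub ((tendsto_inv_atTop_zero.comp hnorm).smul_const b)
  have hnear : ∀ᶠ q in 𝓝 z, ‖q + a • v‖ < ‖q‖ :=
    (isOpen_lt (by fun_prop) continuous_norm).mem_nhds hlt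
  filter_upwards [hdir.eventually hnear, hnorm.eventually_ge_atTop a⁻¹,
    hnorm.eventually_gt_atTop 0] with x hx hxa hx0
  have hstep := norm_add_smul_lt_of_le hx (inv_pos.2 hx0) (inv_le_of_inv_le₀ ha hxa)
  rw [← smul_add, norm_smul, norm_smul] at hstep
  exact lt_of_mul_lt_mul_left hstep (norm_nonneg _)

end Directions

section Multiples

variable {V : Type*} [SeminormedAddCommGroup V] [NormedSpace ℝ V] {h : V → V}

theorem norm_sub_le_norm_smul_sub {x b : V} {t : ℝ} (ht : 1 ≤ t) (hb : ‖b‖ ≤ ‖x - b‖) :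
    ‖x - b‖ ≤ ‖t • x - b‖ := by
  have ht' : 0 ≤ t - 1 := sub_nonneg.2 ht
  have : t * ‖x - b‖ ≤ ‖t • x - b‖ + (t - 1) * ‖x - b‖ := by
    calc t * ‖x - b‖ = ‖(t • x - b) - (t - 1) • b‖ := by
          rw [← norm_smul_of_nonneg (by linarith)]
          congr 1
          module
      _ ≤ ‖t • x - b‖ + (t - 1) * ‖b‖ := by
          rw [← norm_smul_of_nonneg ht']
          exact norm_sub_le _ _
      _ ≤ ‖t • x - b‖ + (t - 1) * ‖x - b‖ := by gcongr
  linarith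

theorem ne_smul_of_norm_sub_lt (hh : LipschitzWith 1 h) {x w : V} {t : ℝ} (ht : 1 ≤ t)
    (hw : ‖h w‖ ≤ ‖x - h w‖) (hlt : ‖x - w‖ < ‖x - h w‖) : h x ≠ t • x := by
  intro hx
  have hle : ‖t • x - h w‖ ≤ ‖x - w‖ := by
    simpa only [hx, NNReal.coe_one, one_mul] using hh.norm_sub_le x w
  exact (hlt.trans_le (norm_sub_le_norm_smul_sub ht hw)).not_ge hle

theorem isBounded_setOf_eq_smul_of_forall_illuminates [ProperSpace V] (hh : LipschitzWith 1 h)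
    (hv : ∀ z : V, ‖z‖ = 1 → ∃ w, Illuminates (h w - w) z) :
    IsBounded {x | ∃ t : ℝ, 1 ≤ t ∧ h x = t • x} := by
  suffices hev : ∀ᶠ x in cobounded V, ¬ ∃ t : ℝ, 1 ≤ t ∧ h x = t • x from isBounded_def.2 hev
  refine eventually_cobounded_of_forall_atInftyAlong fun z hz ↦ ?_
  obtain ⟨w, hw⟩ := hv z hz
  have hlong : ∀ᶠ x in atInftyAlong z, 2 * ‖h w‖ ≤ ‖x‖ :=
    (tendsto_norm_cobounded_atTop.eventually_ge_atTop _).filter_mono inf_le_left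
  filter_upwards [hw.eventually_norm_sub_add_lt (h w), hlong] with x hlt hx
  rintro ⟨t, ht, hxt⟩
  rw [sub_add_sub_cancel] at hlt
  have hhw : ‖h w‖ ≤ ‖x - h w‖ := by linarith [norm_sub_norm_le x (h w)]
  exact ne_smul_of_norm_sub_lt hh ht hhw hlt hxt

end Multiples

section BrowderMap

variable {V : Type*} [SeminormedAddCommGroup V] [NormedSpace ℝ V] {h : V → V} {x y : V} {s : ℝ}

/-- The convex combination of `h` and the constant map `y` with weights `1 - s` and `s`. For
nonexpansive `h` it is a contraction when `0 < s ≤ 1`, and its fixed points approximate those of `h`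
as `s → 0` (Browder). -/
def browderMap (h : V → V) (y : V) (s : ℝ) (x : V) : V :=
  (1 - s) • h x + s • y

theorem browderMap_zero (h : V → V) (y : V) : browderMap h y 0 = h := by
  ext x
  simp only [browderMap, sub_zero, one_smul, zero_smul, add_zero]

theorem dist_le_of_isFixedPt_browderMap (hh : LipschitzWith 1 h) (hs₀ : 0 < s) (hs₁ : s ≤ 1)
    (hx : IsFixedPt (browderMap h y s) x) {x₀ : V} (hx₀ : IsFixedPt h x₀) :
    dist x x₀ ≤ dist y x₀ := by
  have hdecomp : x - x₀ = (1 - s) • (h x - x₀) + s • (y - x₀) := by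
    nth_rw 1 [← hx.eq]
    unfold browderMap
    module
  have hhx : ‖h x - x₀‖ ≤ ‖x - x₀‖ := by
    simpa only [hx₀.eq, NNReal.coe_one, one_mul] using hh.norm_sub_le x x₀
  have hle : ‖x - x₀‖ ≤ (1 - s) * ‖x - x₀‖ + s * ‖y - x₀‖ := by
    calc ‖x - x₀‖ = ‖(1 - s) • (h x - x₀) + s • (y - x₀)‖ := congrArg norm hdecomp
      _ ≤ (1 - s) * ‖h x - x₀‖ + s * ‖y - x₀‖ := by
        rw [← norm_smul_of_nonneg (sub_nonneg.2 hs₁), ← norm_smul_of_nonneg hs₀.le]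
        exact norm_add_le _ _
      _ ≤ (1 - s) * ‖x - x₀‖ + s * ‖y - x₀‖ := by
        have := sub_nonneg.2 hs₁
        gcongr
  rw [dist_eq_norm, dist_eq_norm]
  exact le_of_mul_le_mul_left (by linarith) hs₀

theorem illuminates_of_isFixedPt_browderMap (hs₀ : 0 < s) (hs₁ : s < 1)
    (hx : IsFixedPt (browderMap h y s) x) (hxy : ‖x‖ < ‖y‖) : Illuminates (h x - x) y := by
  refine illuminates_iff_exists_pos.2 ⟨s⁻¹ * (1 - s), mul_pos (inv_pos.2 hs₀) (sub_pos.2 hs₁), ?_⟩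
  have hsmul : (1 - s) • (h x - x) = s • (x - y) := by
    rw [smul_sub, eq_sub_of_add_eq hx.eq]
    module
  rwa [mul_smul, hsmul, inv_smul_smul₀ hs₀.ne', add_sub_cancel]

end BrowderMap

section FixedPoints

variable {V : Type*} [NormedAddCommGroup V] [NormedSpace ℝ V] {h : V → V}

theorem exists_isFixedPt_browderMap [CompleteSpace V] (hh : LipschitzWith 1 h) (y : V) {s : ℝ}
    (hs₀ : 0 < s) (hs₁ : s ≤ 1) : ∃ x, IsFixedPt (browderMap h y s) x := by
  have hlt : ‖1 - s‖₊ < 1 := by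
    rw [← NNReal.coe_lt_coe, coe_nnnorm, Real.norm_of_nonneg (sub_nonneg.2 hs₁), NNReal.coe_one]
    exact sub_lt_self 1 hs₀
  have hlip : LipschitzWith ‖1 - s‖₊ (browderMap h y s) := by
    simpa only [mul_one, add_zero, comp_apply] using!
      ((lipschitzWith_smul (1 - s)).comp hh).add (LipschitzWith.const (s • y))
  exact ⟨_, ContractingWith.fixedPoint_isFixedPt ⟨hlt, hlip⟩⟩

theorem isClosed_setOf_exists_isFixedPt_browderMap (hh : Continuous h) (y : V) {K : Set V}
    (hK : IsCompact K) : IsClosed {s : ℝ | ∃ x ∈ K, IsFixedPt (browderMap h y s) x} := by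
  have : CompactSpace K := isCompact_iff_compactSpace.1 hK
  have hclosed : IsClosed {p : K × ℝ | browderMap h y p.2 p.1 = p.1} :=
    isClosed_eq (by unfold browderMap; fun_prop) (by fun_prop)
  convert isClosedMap_snd_of_compactSpace _ hclosed using 1
  ext s
  simp [IsFixedPt]

theorem exists_isFixedPt_of_forall_browderMap (hh : Continuous h) (y : V) {K : Set V}
    (hK : IsCompact K)
    (hs : ∀ s ∈ Set.Ioo (0 : ℝ) 1, ∃ x ∈ K, IsFixedPt (browderMap h y s) x) :
    ∃ x ∈ K, IsFixedPt h x := by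
  have hsub : closure (Set.Ioo (0 : ℝ) 1) ⊆ {s | ∃ x ∈ K, IsFixedPt (browderMap h y s) x} :=
    closure_minimal hs (isClosed_setOf_exists_isFixedPt_browderMap hh y hK)
  have hzero : (0 : ℝ) ∈ closure (Set.Ioo 0 1) := by
    rw [closure_Ioo zero_ne_one]
    exact Set.left_mem_Icc.2 zero_le_one
  simpa only [Set.mem_ofPred_eq, browderMap_zero] using hsub hzero

theorem exists_illuminates_of_forall_isFixedPt_norm_lt [ProperSpace V] (hh : LipschitzWith 1 h)
    (hne : (fixedPoints h).Nonempty) {y : V} (hy : ∀ x ∈ fixedPoints h, ‖x‖ < ‖y‖) :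
    ∃ w, Illuminates (h w - w) y := by
  by_contra! hdark
  obtain ⟨x₀, hx₀⟩ := hne
  have hK : IsCompact (closedBall x₀ (dist y x₀) ∩ {x | ‖y‖ ≤ ‖x‖}) :=
    (isCompact_closedBall _ _).inter_right (isClosed_le continuous_const continuous_norm)
  obtain ⟨x, hxK, hx⟩ := exists_isFixedPt_of_forall_browderMap hh.continuous y hK
    fun s ⟨hs₀, hs₁⟩ ↦ by
      obtain ⟨x, hx⟩ := exists_isFixedPt_browderMap hh y hs₀ hs₁.le
      have hxy : ‖y‖ ≤ ‖x‖ := not_lt.1 fun hlt ↦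
        hdark x (illuminates_of_isFixedPt_browderMap hs₀ hs₁ hx hlt)
      exact ⟨x, ⟨dist_le_of_isFixedPt_browderMap hh hs₀ hs₁.le hx hx₀, hxy⟩, hx⟩
  exact (hy x hx).not_ge hxK.2

theorem exists_illuminates_of_isBounded_fixedPoints [ProperSpace V] (hh : LipschitzWith 1 h)
    (hne : (fixedPoints h).Nonempty) (hb : IsBounded (fixedPoints h)) {z : V} (hz : ‖z‖ = 1) :
    ∃ w, Illuminates (h w - w) z := by
  obtain ⟨r, hr₀, hr⟩ := hb.exists_pos_norm_lt
  obtain ⟨w, hw⟩ := exists_illuminates_of_forall_isFixedPt_norm_lt (y := r • z) hh hne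
    (by simpa only [norm_smul_of_nonneg hr₀.le, hz, mul_one] using hr)
  exact ⟨w, hw.of_smul hr₀⟩

theorem fixedPoints_nonempty_of_isBounded_setOf_eq_smul [ProperSpace V] (hh : LipschitzWith 1 h)
    (hb : IsBounded {x | ∃ t : ℝ, 1 ≤ t ∧ h x = t • x}) : (fixedPoints h).Nonempty := by
  obtain ⟨x, -, hx⟩ := exists_isFixedPt_of_forall_browderMap hh.continuous 0 hb.isCompact_closure
    fun s ⟨hs₀, hs₁⟩ ↦ by
      obtain ⟨x, hx⟩ := exists_isFixedPt_browderMap hh 0 hs₀ hs₁.le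
      have hs : 0 < 1 - s := sub_pos.2 hs₁
      have hxs : h x = (1 - s)⁻¹ • x := by
        rw [eq_inv_smul_iff₀ hs.ne']
        simpa only [browderMap, smul_zero, add_zero] using hx.eq
      have hone : 1 ≤ (1 - s)⁻¹ := (one_le_inv₀ hs).2 (sub_le_self 1 hs₀.le)
      exact ⟨x, subset_closure ⟨_, hone, hxs⟩, hx⟩
  exact ⟨x, hx⟩

theorem fixedPoints_nonempty_and_isBounded_iff_forall_illuminates [ProperSpace V]
    (hh : LipschitzWith 1 h) :
    ((fixedPoints h).Nonempty ∧ IsBounded (fixedPoints h)) ↔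
      ∀ z : V, ‖z‖ = 1 → ∃ w, Illuminates (h w - w) z := by
  refine ⟨fun ⟨hne, hb⟩ z hz ↦ exists_illuminates_of_isBounded_fixedPoints hh hne hb hz,
    fun hv ↦ ?_⟩
  have hb := isBounded_setOf_eq_smul_of_forall_illuminates hh hv
  exact ⟨fixedPoints_nonempty_of_isBounded_setOf_eq_smul hh hb,
    hb.subset fun x hx ↦ ⟨1, le_rfl, by rw [one_smul, hx.eq]⟩⟩

end FixedPoints

/-- For a nonexpansive map `h` on a finite-dimensional real normed space,
`Fix(h)` is nonempty and bounded iff finitely many vectors `wⁱ` exist such that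
`{h(wⁱ) - wⁱ}` illuminates the closed unit ball. -/
theorem stmt1 (V : Type*) [NormedAddCommGroup V] [NormedSpace ℝ V] [FiniteDimensional ℝ V]
    (h : V → V) (hne : ∀ x y : V, ‖h x - h y‖ ≤ ‖x - y‖) :
    (({x : V | h x = x}).Nonempty ∧ Bornology.IsBounded {x : V | h x = x}) ↔
    (∃ (m : ℕ) (w : Fin m → V), ∀ z : V, ‖z‖ = 1 →
      ∃ i : Fin m, ∃ ε > 0, ∀ l : ℝ, 0 < l → l < ε → ‖z + l • (h (w i) - w i)‖ < 1) := by
  have : ProperSpace V := FiniteDimensional.proper ℝ V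
  have hh : LipschitzWith 1 h := LipschitzWith.of_dist_le_mul fun x y ↦ by
    simpa only [dist_eq_norm, NNReal.coe_one, one_mul] using hne x y
  refine (fixedPoints_nonempty_and_isBounded_iff_forall_illuminates hh).trans ⟨fun hv ↦ ?_, ?_⟩
  · obtain ⟨m, w, hw⟩ := exists_fin_forall_illuminates (isCompact_sphere (0 : V) 1)
      fun z hz ↦ hv z (mem_sphere_zero_iff_norm.1 hz)
    refine ⟨m, w, fun z hz ↦ ?_⟩
    simpa only [Illuminates, hz] using hw z (mem_sphere_zero_iff_norm.2 hz)
  · rintro ⟨m, w, hw⟩ z hz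
    obtain ⟨i, hi⟩ := hw z hz
    exact ⟨w i, by simpa only [Illuminates, hz] using hi⟩
end
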